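/- arXiv:0906.2098 — 2 statements merged into one kernel-verified Lean document; each statement's English description precedes it below -/
import Mathlib

section
/- Let G be a chain graph with chain components 𝒯 and let ≺ be a strict total order of 𝒯 consistent with G. A strictly positive joint probability mass function p of the discrete random vector X = (X_v)_{v∈V} obeys the multivariate regression Markov property for G with respect to ≺ if and only if it obeys the block-recursive Markov property of type IV for G. -/
open scoped Classical BigOperators

/-- A mixed graph on a node set `V`: a set of directed edges and a symmetric
irreflexive set of undirected edges, the two edge sets being disjoint. -/
structure MixedGraph (V : Type*) where
  dir : V → V → Prop
  undir : V → V → Prop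
  undir_symm : ∀ {a b}, undir a b → undir b a
  undir_irrefl : ∀ a, ¬ undir a a
  edge_disjoint : ∀ a b, dir a b → ¬ undir a b

namespace MixedGraph

variable {V : Type*} [Fintype V] [DecidableEq V] (G : MixedGraph V)

/-- One step of a semi-directed path: an undirected edge or a directed edge
followed in the direction of traversal. -/
def step (a b : V) : Prop := G.dir a b ∨ G.undir a b

/-- No semi-directed cycle: there is no directed edge `a → b` together with a
semi-directed path from `b` back to `a`. -/
def NoSemiDirectedCycle : Prop :=
  ∀ a b : V, G.dir a b → ¬ Relation.ReflTransGen G.step b a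

/-- Two nodes are in the same chain component iff they are joined by a path of
undirected edges (the equivalence relation generated by the undirected part). -/
def sameComp (a b : V) : Prop := Relation.ReflTransGen G.undir a b

/-- The chain component of a node. -/
noncomputable def component (v : V) : Finset V :=
  Finset.univ.filter fun w => G.sameComp v w

/-- `T` is a chain component of `G`. -/
def IsComponent (T : Finset V) : Prop := ∃ v, T = G.component v

/-- The collection of chain components of `G`. -/
noncomputable def componentsF : Finset (Finset V) :=
  Finset.univ.image fun v => G.component v

/-- The parents `pa_G(A)`: nodes outside `A` with a directed edge into `A`. -/
noncomputable def paG (A : Finset V) : Finset V :=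
  Finset.univ.filter fun w => w ∉ A ∧ ∃ v ∈ A, G.dir w v

/-- The (inclusive) neighbours `Nb_G(A)`: `A` together with all nodes joined to
`A` by an undirected edge. -/
noncomputable def nbG (A : Finset V) : Finset V :=
  A ∪ Finset.univ.filter fun w => ∃ v ∈ A, G.undir v w

/-- The edge relation of the directed graph `D` of chain components:
`T₁ → T₂` iff they are distinct chain components and `G` has a directed edge
from a node of `T₁` to a node of `T₂`. -/
def dirD (T₁ T₂ : Finset V) : Prop :=
  G.IsComponent T₁ ∧ G.IsComponent T₂ ∧ T₁ ≠ T₂ ∧ ∃ v ∈ T₁, ∃ w ∈ T₂, G.dir v w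

/-- `pa_D(T)`: the union of the parent components of `T` in `D`. -/
noncomputable def paD (T : Finset V) : Finset V :=
  Finset.univ.filter fun w => G.dirD (G.component w) T

/-- `nd_D(T)`: the union of the components `T'` such that there is no directed
path from `T` to `T'` in `D`. -/
noncomputable def ndD (T : Finset V) : Finset V :=
  Finset.univ.filter fun w => ¬ Relation.ReflTransGen G.dirD T (G.component w)

/-- A set of nodes `A` is connected if the subgraph of the undirected part of
`G` induced by `A` is connected (in particular nonempty). -/
def ConnectedIn (A : Finset V) : Prop :=
  A.Nonempty ∧ ∀ a ∈ A, ∀ b ∈ A,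
    Relation.ReflTransGen (fun x y => x ∈ A ∧ y ∈ A ∧ G.undir x y) a b

/-- The connected component of `v` inside the induced subgraph on `A`. -/
noncomputable def compIn (A : Finset V) (v : V) : Finset V :=
  A.filter fun w =>
    Relation.ReflTransGen (fun x y => x ∈ A ∧ y ∈ A ∧ G.undir x y) v w

/-- The set of connected components of the induced subgraph on `A`. -/
noncomputable def connComps (A : Finset V) : Finset (Finset V) :=
  A.image fun v => G.compIn A v

/-- `ord` is a strict total order of the chain components consistent with `G`:
`ord T T'` implies that `T` is not a parent component of `T'`. -/
def ConsistentOrder (ord : Finset V → Finset V → Prop) : Prop :=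
  (∀ T₁ T₂, G.IsComponent T₁ → G.IsComponent T₂ → T₁ ≠ T₂ →
      ord T₁ T₂ ∨ ord T₂ T₁) ∧
  (∀ T, G.IsComponent T → ¬ ord T T) ∧
  (∀ T₁ T₂ T₃, G.IsComponent T₁ → G.IsComponent T₂ → G.IsComponent T₃ →
      ord T₁ T₂ → ord T₂ T₃ → ord T₁ T₃) ∧
  (∀ T₁ T₂, G.IsComponent T₁ → G.IsComponent T₂ → ord T₁ T₂ → ¬ G.dirD T₁ T₂)

/-- `pre(T)`: the union of all the chain components `T'` with `T ≺ T'`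
(the predecessors, i.e. the past, of `T`). -/
noncomputable def pre (ord : Finset V → Finset V → Prop) (T : Finset V) :
    Finset V :=
  Finset.univ.filter fun w => ord T (G.component w)

end MixedGraph

/-- A cell of the joint contingency table: variable `v` takes one of the
levels `0, …, r v - 1` (level `0` playing the role of the first level `1`). -/
abbrev Cell {V : Type*} (r : V → ℕ) := ∀ v : V, Fin (r v)

variable {V : Type*} [Fintype V] [DecidableEq V] {r : V → ℕ}

/-- The marginal probability `p_S(i_S)` (as a function of a full cell `i`,
depending on it only through the coordinates in `S`). -/
noncomputable def marginal (p : Cell r → ℝ) (S : Finset V) (i : Cell r) : ℝ :=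
  ∑ j : Cell r, if ∀ v ∈ S, j v = i v then p j else 0

/-- The conditional probability `p_{A|B}(i_A | i_B)`. -/
noncomputable def condProb (p : Cell r → ℝ) (A B : Finset V) (i : Cell r) : ℝ :=
  marginal p (A ∪ B) i / marginal p B i

/-- `p` is a strictly positive joint probability mass function. -/
def IsPosPMF (p : Cell r → ℝ) : Prop :=
  (∀ i, 0 < p i) ∧ ∑ i : Cell r, p i = 1

/-- Conditional independence `A ⊥ B | C`. -/
def CondIndep (p : Cell r → ℝ) (A B C : Finset V) : Prop :=
  ∀ i : Cell r,
    marginal p (A ∪ B ∪ C) i * marginal p C i =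
      marginal p (A ∪ C) i * marginal p (B ∪ C) i

/-- The cell agreeing with `i` on `S` and equal to the first (reference)
level outside `S`. -/
def splice (hr : ∀ v, 2 ≤ r v) (S : Finset V) (i : Cell r) : Cell r :=
  fun v => if v ∈ S then i v else ⟨0, by have := hr v; omega⟩

/-- The conditional multivariate logistic contrast
`η^{(A)}(i_A | i_B) = Σ_{s ⊆ A} (−1)^{|A∖s|} log p_{A|B}((i_s, 1_{A∖s}) | i_B)`. -/
noncomputable def mlContrast (hr : ∀ v, 2 ≤ r v) (p : Cell r → ℝ)
    (A B : Finset V) (i : Cell r) : ℝ :=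
  ∑ s ∈ A.powerset,
    (-1 : ℝ) ^ (A \ s).card * Real.log (condProb p A B (splice hr (s ∪ B) i))

/-- The multivariate regression (MR) Markov property for the chain graph `G`
with respect to the consistent ordering `ord`: for every chain component `T`
and every nonempty `A ⊆ T`, (MR1) if `A` is connected then
`A ⊥ (pre(T)∖pa_G(A)) | pa_G(A)`, and (MR2) if `A` is disconnected then its
connected components are mutually independent given `pre(T)`. -/
def MRMarkov (G : MixedGraph V) (ord : Finset V → Finset V → Prop)
    (p : Cell r → ℝ) : Prop :=
  ∀ T : Finset V, G.IsComponent T → ∀ A ⊆ T, A.Nonempty →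
    (G.ConnectedIn A →
      CondIndep p A (G.pre ord T \ G.paG A) (G.paG A)) ∧
    (¬ G.ConnectedIn A →
      ∀ i : Cell r,
        condProb p A (G.pre ord T) i =
          ∏ Aj ∈ G.connComps A, condProb p Aj (G.pre ord T) i)

/-- The block-recursive Markov property of type IV for the chain graph `G`:
(IV0) `T ⊥ (nd_D(T)∖pa_D(T)) | pa_D(T)`;
(IV1) `A ⊥ (pa_D(T)∖pa_G(A)) | pa_G(A)` for all `A ⊆ T`;
(IV2) `A ⊥ (T∖Nb_G(A)) | pa_D(T)` for all connected `A ⊆ T`. -/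
def TypeIVMarkov (G : MixedGraph V) (p : Cell r → ℝ) : Prop :=
  (∀ T : Finset V, G.IsComponent T →
      CondIndep p T (G.ndD T \ G.paD T) (G.paD T)) ∧
  (∀ T : Finset V, G.IsComponent T → ∀ A ⊆ T,
      CondIndep p A (G.paD T \ G.paG A) (G.paG A)) ∧
  (∀ T : Finset V, G.IsComponent T → ∀ A ⊆ T, G.ConnectedIn A →
      CondIndep p A (T \ G.nbG A) (G.paD T))

/-!
The independence part is a semigraphoid argument: decomposition, weak union and contraction hold
for every nonnegative `p`, and no intersection property enters. Both properties are compared with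
a third one, in which `pre(T)` plays the role of both `nd_D(T)` and `pa_D(T)`.

Applied with `A = T`, it gives `T ⊥ pre(T) | pa_D(T)`, and this allows `pre(T)` and `pa_D(T)` to be
exchanged in (IV1) and (IV2). Conversely (IV0) restricts to the same independence, since
`pre(T) ⊆ nd_D(T)`. To reach all of `nd_D(T)` from `pre(T)`, remove from an ancestral set
`W ⊆ nd_D(T)` the latest component `S` of `W`: when `S` is later than `T`, the set
`T ∪ (W ∖ S)` lies in the past of `S`, so `S ⊥ T | W ∖ S`, which contraction combines with the
induction hypothesis `T ⊥ (W ∖ S) | pa_D(T)`.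

On the multivariate regression side, `p_{A|pre(T)}` factors over the connected components of every
`A ⊆ T` if and only if each connected `B ⊆ T` is independent of `T ∖ Nb_G(B)` given `pre(T)`: one
direction peels off one component at a time, the other compares the factorizations of `B`, of
`T ∖ Nb_G(B)` and of their union. When each factor depends on `pre(T)` only through the parents of
its component, the product depends on it only through `pa_G(A)`, which extends (MR1) to
disconnected sets.
-/

section Marginal

variable {V : Type*} [Fintype V] [DecidableEq V] {r : V → ℕ} {p : Cell r → ℝ}
  {A B C R S T U : Finset V}

lemma dependsOn_marginal (p : Cell r → ℝ) (S : Finset V) : DependsOn (marginal p S) (S : Set V) :=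
  fun i j hij => Finset.sum_congr rfl fun k _ =>
    if_congr (forall₂_congr fun v hv => by rw [hij v hv]) rfl rfl

lemma dependsOn_condProb (p : Cell r → ℝ) (A B : Finset V) :
    DependsOn (condProb p A B) (↑(A ∪ B) : Set V) := fun i j hij => by
  unfold condProb
  rw [dependsOn_marginal p (A ∪ B) hij,
    dependsOn_marginal p B fun v hv => hij v (Finset.mem_union_right A hv)]

lemma marginal_mul_of_dependsOn {f : Cell r → ℝ} (hf : DependsOn f (S : Set V))
    (g : Cell r → ℝ) (i : Cell r) :
    marginal (fun j => f j * g j) S i = f i * marginal g S i := by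
  simp only [marginal, Finset.mul_sum, mul_ite, mul_zero]
  refine Finset.sum_congr rfl fun j _ => ?_
  split_ifs with hj
  · rw [hf hj]
  · rfl

lemma marginal_marginal (p : Cell r → ℝ) (h : R ∪ S = Finset.univ) (i : Cell r) :
    marginal (marginal p S) R i = marginal p (R ∩ S) i := by
  have hmem : ∀ v, v ∈ R ∨ v ∈ S := fun v => Finset.mem_union.1 (h ▸ Finset.mem_univ v)
  have hiff : ∀ j k : Cell r, ((∀ v ∈ R, j v = i v) ∧ ∀ v ∈ S, k v = j v) ↔
      j = R.piecewise i k ∧ ∀ v ∈ R ∩ S, k v = i v := by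
    simp only [funext_iff, Finset.piecewise, Finset.mem_inter]
    grind
  calc marginal (marginal p S) R i
      = ∑ j : Cell r, ∑ k : Cell r, if (∀ v ∈ R, j v = i v) ∧ ∀ v ∈ S, k v = j v
          then p k else 0 := by
        simp only [marginal, ite_and, Finset.sum_ite_irrel, Finset.sum_const_zero]
    _ = ∑ k : Cell r, ∑ j : Cell r, if j = R.piecewise i k ∧ ∀ v ∈ R ∩ S, k v = i v
          then p k else 0 := by
        rw [Finset.sum_comm]
        simp only [hiff]
    _ = marginal p (R ∩ S) i := by
        simp only [marginal, ite_and, Finset.sum_ite_eq', Finset.mem_univ, if_true]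

lemma mul_marginal_sdiff {f g : Cell r → ℝ} (hf : DependsOn f (A : Set V)) (hA : Disjoint A U)
    (hg : DependsOn g (B : Set V)) (hB : Disjoint B U) (hS : U ⊆ S) (hT : U ⊆ T)
    (h : ∀ i, f i * marginal p S i = g i * marginal p T i) (i : Cell r) :
    f i * marginal p (S \ U) i = g i * marginal p (T \ U) i := by
  have hsum : ∀ {W}, U ⊆ W → marginal p (W \ U) i = marginal (marginal p W) Uᶜ i := fun hW => by
    rw [marginal_marginal p (by grind [Finset.mem_compl]), Finset.inter_comm,
      Finset.sdiff_eq_inter_compl]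
  have hU : ∀ {W}, Disjoint W U → (W : Set V) ⊆ (↑Uᶜ : Set V) := fun hW =>
    Finset.coe_subset.2 (Finset.subset_compl_iff_disjoint_right.2 hW)
  rw [hsum hS, hsum hT, ← marginal_mul_of_dependsOn (hf.mono (hU hA)),
    ← marginal_mul_of_dependsOn (hg.mono (hU hB)), funext h]

lemma marginal_nonneg (hp : 0 ≤ p) (S : Finset V) (i : Cell r) : 0 ≤ marginal p S i :=
  Finset.sum_nonneg fun j _ => by split_ifs; exacts [hp j, le_rfl]

lemma marginal_anti (hp : 0 ≤ p) (hST : S ⊆ T) (i : Cell r) : marginal p T i ≤ marginal p S i := by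
  refine Finset.sum_le_sum fun j _ => ?_
  split_ifs with hT hS
  exacts [le_rfl, absurd (fun v hv => hT v (hST hv)) hS, hp j, le_rfl]

lemma marginal_eq_zero_of_subset (hp : 0 ≤ p) (hST : S ⊆ T) {i : Cell r}
    (hS : marginal p S i = 0) : marginal p T i = 0 :=
  le_antisymm (hS ▸ marginal_anti hp hST i) (marginal_nonneg hp T i)

end Marginal

section CondIndep

variable {V : Type*} [Fintype V] [DecidableEq V] {r : V → ℕ} {p : Cell r → ℝ}
  {A A' B B' C C' D Q : Finset V}

lemma condIndep_sdiff : CondIndep p A (B \ C) C ↔ CondIndep p A B C := by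
  simp only [CondIndep, Finset.union_assoc, Finset.sdiff_union_self_eq_union]

lemma condIndep_union_self : CondIndep p A (B ∪ C) C ↔ CondIndep p A B C := by
  simp only [CondIndep, Finset.union_assoc, Finset.union_self]

namespace CondIndep

lemma symm (h : CondIndep p A B C) : CondIndep p B A C := fun i => by
  rw [Finset.union_comm B A, h i, mul_comm]

lemma mono_right (h : CondIndep p A B C) (hB : B' ⊆ B ∪ C) (hAB : Disjoint A B) :
    CondIndep p A B' C := by
  intro i
  have hU : Disjoint (A ∪ C) (B \ (B' ∪ C)) := by grind [Finset.disjoint_left]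
  have hABC : (A ∪ B ∪ C) \ (B \ (B' ∪ C)) = A ∪ B' ∪ C := by grind [Finset.disjoint_left]
  have hBC : (B ∪ C) \ (B \ (B' ∪ C)) = B' ∪ C := by grind
  have := mul_marginal_sdiff (dependsOn_marginal p C)
    (hU.mono_left Finset.subset_union_right) (dependsOn_marginal p (A ∪ C)) hU
    (by grind) (by grind) (fun j => (mul_comm _ _).trans (h j)) i
  rwa [hABC, hBC, mul_comm] at this

lemma mono_left (h : CondIndep p A B C) (hA : A' ⊆ A) (hAB : Disjoint A B) :
    CondIndep p A' B C :=
  (h.symm.mono_right (hA.trans Finset.subset_union_left) hAB.symm).symm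

lemma weak_union (hp : 0 ≤ p) (h : CondIndep p A B C) (hC : C ⊆ C') (hC' : C' ⊆ B ∪ C)
    (hAB : Disjoint A B) : CondIndep p A B C' := by
  intro i
  have hi := h i
  have hi' := h.mono_right hC' hAB i
  have hB : B ∪ C' = B ∪ C := by grind
  rw [Finset.union_assoc, Finset.union_eq_left.2 hC] at hi'
  rw [Finset.union_assoc] at hi ⊢
  rw [hB]
  by_cases h0 : marginal p C i = 0
  · simp only [marginal_eq_zero_of_subset hp (Finset.subset_union_right : C ⊆ B ∪ C) h0,
      marginal_eq_zero_of_subset hp hC h0, mul_zero]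
  · refine mul_right_cancel₀ h0 ?_
    linear_combination marginal p C' i * hi - marginal p (B ∪ C) i * hi'

lemma contraction (hp : 0 ≤ p) (h : CondIndep p A C' C) (h' : CondIndep p A B C')
    (hC : C ⊆ C') (hC' : C' ⊆ B) : CondIndep p A B C := by
  intro i
  have hi := h i
  have hi' := h' i
  simp only [Finset.union_assoc, Finset.union_eq_left.2 hC, Finset.union_eq_left.2 hC',
    Finset.union_eq_left.2 (hC.trans hC')] at hi hi' ⊢
  by_cases h0 : marginal p C' i = 0
  · simp only [marginal_eq_zero_of_subset hp hC' h0,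
      marginal_eq_zero_of_subset hp (hC'.trans Finset.subset_union_right) h0, zero_mul, mul_zero]
  · refine mul_right_cancel₀ h0 ?_
    linear_combination marginal p C i * hi' + marginal p B i * hi

lemma condIndep_iff_of_subset (hp : 0 ≤ p) (h : CondIndep p D Q C) (hA : A ⊆ D) (hB : B ⊆ D)
    (hCQ : C ⊆ Q) (hDQ : Disjoint D Q) (hAB : Disjoint A B) :
    CondIndep p A B Q ↔ CondIndep p A B C := by
  have hAQ : Disjoint A Q := hDQ.mono_left hA
  constructor <;> intro hAB'
  · have hABQ : CondIndep p A (B ∪ Q) C :=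
      (h.mono_left hA hDQ).contraction hp (condIndep_union_self.2 hAB') hCQ
        Finset.subset_union_right
    exact hABQ.mono_right (by grind) (Finset.disjoint_union_right.2 ⟨hAB, hAQ⟩)
  · have hQ : CondIndep p Q (A ∪ B) (B ∪ C) :=
      (h.mono_left (Finset.union_subset hA hB) hDQ).symm.weak_union hp
        Finset.subset_union_right (by grind) (hDQ.symm.mono_right (Finset.union_subset hA hB))
    have hAQBC : CondIndep p A (Q ∪ (B ∪ C)) (B ∪ C) := condIndep_union_self.2
      (hQ.mono_right (by grind) (hDQ.symm.mono_right (Finset.union_subset hA hB))).symm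
    have hdisj : Disjoint A (Q ∪ (B ∪ C)) := by grind [Finset.disjoint_left]
    exact (((condIndep_union_self.2 hAB').contraction hp hAQBC Finset.subset_union_right
      Finset.subset_union_right).weak_union hp hCQ (by grind) hdisj).mono_right (by grind) hdisj

lemma adjoin_right (hp : 0 ≤ p) (h : CondIndep p A B C) (h' : CondIndep p D Q C') (hC : C ⊆ B)
    (hC' : C' ⊆ B) (hA : A ⊆ Q) (hB : B ⊆ Q) (hDQ : Disjoint D Q) : CondIndep p A (D ∪ B) C := by
  have hDA : CondIndep p D A B :=
    (h'.weak_union hp hC' (hB.trans Finset.subset_union_left) hDQ).mono_right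
      (hA.trans Finset.subset_union_left) hDQ
  exact h.contraction hp (condIndep_union_self.2 hDA.symm) hC Finset.subset_union_right

lemma condProb_eq (h : CondIndep p A B C) (hCB : C ⊆ B) {i : Cell r} (hC : marginal p C i ≠ 0)
    (hB : marginal p B i ≠ 0) : condProb p A B i = condProb p A C i := by
  have hi := h i
  rw [Finset.union_assoc, Finset.union_eq_left.2 hCB] at hi
  exact (div_eq_div_iff hB hC).2 hi

end CondIndep

lemma condIndep_of_condProb_eq (hp : 0 ≤ p) {f : Cell r → ℝ}
    (hf : DependsOn f (↑(A ∪ C) : Set V)) (hCB : C ⊆ B) (hAB : Disjoint A B)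
    (h : ∀ i, marginal p B i ≠ 0 → condProb p A B i = f i) : CondIndep p A B C := by
  have hfac : ∀ i, marginal p (A ∪ B) i = f i * marginal p B i := fun i => by
    by_cases hB : marginal p B i = 0
    · rw [hB, marginal_eq_zero_of_subset hp Finset.subset_union_right hB, mul_zero]
    · rw [← h i hB, condProb, div_mul_cancel₀ _ hB]
  have hU : Disjoint (A ∪ C) (B \ C) := by grind [Finset.disjoint_left]
  intro i
  have hAC : marginal p (A ∪ C) i = f i * marginal p C i := by
    have hone : DependsOn (fun _ : Cell r => (1 : ℝ)) ((∅ : Finset V) : Set V) := fun _ _ _ => rfl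
    have := mul_marginal_sdiff hone (Finset.disjoint_empty_left _) hf hU (by grind)
      Finset.sdiff_subset (fun j => (one_mul _).trans (hfac j)) i
    rwa [show (A ∪ B) \ (B \ C) = A ∪ C by grind [Finset.disjoint_left],
      Finset.sdiff_sdiff_eq_self hCB, one_mul] at this
  rw [Finset.union_assoc, Finset.union_eq_left.2 hCB, hfac, hAC]
  ring

lemma condIndep_iff_condProb_union (hp : 0 ≤ p) :
    CondIndep p A B C ↔ ∀ i, marginal p C i ≠ 0 →
      condProb p (A ∪ B) C i = condProb p A C i * condProb p B C i := by
  refine forall_congr' fun i => ?_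
  by_cases h0 : marginal p C i = 0
  · simp only [h0, marginal_eq_zero_of_subset hp (Finset.subset_union_right : C ⊆ A ∪ C) h0,
      mul_zero, zero_mul, ne_eq, not_true_eq_false, false_imp_iff]
  · simp only [ne_eq, h0, not_false_eq_true, true_imp_iff, condProb]
    field_simp

end CondIndep

namespace MixedGraph

section Components

variable {V : Type*} {G : MixedGraph V}

lemma sameComp_symm {a b : V} (h : G.sameComp a b) : G.sameComp b a := by
  have : Std.Symm G.undir := ⟨fun _ _ => G.undir_symm⟩
  exact Std.Symm.symm (r := Relation.ReflTransGen G.undir) _ _ h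

variable [Fintype V] {T A B : Finset V} {v w : V}

lemma mem_component : w ∈ G.component v ↔ G.sameComp v w := by simp [component]

lemma mem_component_self (v : V) : v ∈ G.component v := mem_component.2 .refl

lemma isComponent_component (v : V) : G.IsComponent (G.component v) := ⟨v, rfl⟩

lemma component_eq_component_iff : G.component v = G.component w ↔ v ∈ G.component w := by
  refine ⟨fun h => h ▸ mem_component_self v, fun h => ?_⟩
  have hwv := mem_component.1 h
  ext x
  rw [mem_component, mem_component]
  exact ⟨hwv.trans, (sameComp_symm hwv).trans⟩

lemma IsComponent.component_eq_iff (hT : G.IsComponent T) : G.component v = T ↔ v ∈ T := by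
  obtain ⟨w, rfl⟩ := hT
  exact component_eq_component_iff

lemma NoSemiDirectedCycle.component_ne (hG : G.NoSemiDirectedCycle) (h : G.dir v w) :
    G.component v ≠ G.component w := fun hvw =>
  hG v w h <| Relation.ReflTransGen.mono (fun _ _ => Or.inr) _ _ <|
    mem_component.1 (component_eq_component_iff.1 hvw)

lemma mem_paD : w ∈ G.paD T ↔ G.dirD (G.component w) T := by simp [paD]

lemma mem_ndD : w ∈ G.ndD T ↔ ¬ Relation.ReflTransGen G.dirD T (G.component w) := by simp [ndD]

lemma union_paG_mono [DecidableEq V] (hAB : A ⊆ B) : A ∪ G.paG A ⊆ B ∪ G.paG B := by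
  simp only [Finset.subset_iff, Finset.mem_union, paG, Finset.mem_filter, Finset.mem_univ, true_and]
  grind

lemma paG_subset_paD [DecidableEq V] (hG : G.NoSemiDirectedCycle) (hT : G.IsComponent T)
    (hA : A ⊆ T) : G.paG A ⊆ G.paD T := by
  intro w hw
  obtain ⟨-, v, hv, hwv⟩ := (Finset.mem_filter.1 hw).2
  rw [mem_paD, ← hT.component_eq_iff.2 (hA hv)]
  exact ⟨isComponent_component w, isComponent_component v, hG.component_ne hwv,
    w, mem_component_self w, v, mem_component_self v, hwv⟩

lemma IsComponent.disjoint_ndD (hT : G.IsComponent T) : Disjoint T (G.ndD T) :=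
  Finset.disjoint_left.2 fun _ hw hw' =>
    mem_ndD.1 hw' (by rw [hT.component_eq_iff.2 hw])

/-- Ancestral sets with respect to the directed graph `D` of chain components: sets of nodes that
are unions of chain components and closed under parent components. They are the sets for which
independence of non-descendants is proved, by induction. -/
def IsAncestral (G : MixedGraph V) (W : Finset V) : Prop :=
  ∀ w ∈ W, G.component w ⊆ W ∧ G.paD (G.component w) ⊆ W

lemma isAncestral_ndD (T : Finset V) : G.IsAncestral (G.ndD T) := fun w hw => by
  refine ⟨fun x hx => ?_, fun x hx => ?_⟩ <;> rw [mem_ndD] at *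
  · rwa [component_eq_component_iff.2 hx]
  · exact fun h => hw (h.tail (mem_paD.1 hx))

end Components

section Order

variable {V : Type*} [Fintype V] {G : MixedGraph V} {ord : Finset V → Finset V → Prop}
  {S T W : Finset V} {w : V}

lemma mem_pre : w ∈ G.pre ord T ↔ ord T (G.component w) := by simp [pre]

lemma IsComponent.subset_pre (hT : G.IsComponent T) (h : ord S T) : T ⊆ G.pre ord S := fun _ hw =>
  mem_pre.2 (by rwa [hT.component_eq_iff.2 hw])

namespace ConsistentOrder

lemma ord_of_dirD (hord : G.ConsistentOrder ord) (h : G.dirD S T) : ord T S :=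
  (hord.1 S T h.1 h.2.1 h.2.2.1).resolve_left fun hST => hord.2.2.2 S T h.1 h.2.1 hST h

lemma paD_subset_pre (hord : G.ConsistentOrder ord) (T : Finset V) : G.paD T ⊆ G.pre ord T :=
  fun _ hw => mem_pre.2 (hord.ord_of_dirD (mem_paD.1 hw))

lemma pre_subset_pre (hord : G.ConsistentOrder ord) (hS : G.IsComponent S) (hT : G.IsComponent T)
    (h : ord S T) : G.pre ord T ⊆ G.pre ord S := fun w hw =>
  mem_pre.2 (hord.2.2.1 S T _ hS hT (isComponent_component w) h (mem_pre.1 hw))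

lemma not_ord_of_reflTransGen_dirD (hord : G.ConsistentOrder ord) (hT : G.IsComponent T)
    (h : Relation.ReflTransGen G.dirD T S) : ¬ ord T S := by
  induction h with
  | refl => exact hord.2.1 T hT
  | tail _ hRS ih =>
    exact fun hTS => ih (hord.2.2.1 _ _ _ hT hRS.2.1 hRS.1 hTS (hord.ord_of_dirD hRS))

lemma pre_subset_ndD (hord : G.ConsistentOrder ord) (hT : G.IsComponent T) :
    G.pre ord T ⊆ G.ndD T := fun _ hw =>
  mem_ndD.2 fun h => hord.not_ord_of_reflTransGen_dirD hT h (mem_pre.1 hw)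

lemma disjoint_pre (hord : G.ConsistentOrder ord) (hT : G.IsComponent T) :
    Disjoint T (G.pre ord T) :=
  hT.disjoint_ndD.mono_right (hord.pre_subset_ndD hT)

lemma exists_latest [DecidableEq V] (hord : G.ConsistentOrder ord) (hW : W.Nonempty) :
    ∃ w ∈ W, W \ G.component w ⊆ G.pre ord (G.component w) := by
  let R : V → V → Prop := fun x y => ord (G.component x) (G.component y)
  have : Std.Irrefl R := ⟨fun x => hord.2.1 _ (isComponent_component x)⟩
  have : IsTrans V R := ⟨fun x y z => hord.2.2.1 _ _ _ (isComponent_component x)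
    (isComponent_component y) (isComponent_component z)⟩
  obtain ⟨w, hw, hmin⟩ := (Finite.wellFounded_of_trans_of_irrefl R).has_min (W : Set V) hW
  refine ⟨w, hw, fun x hx => mem_pre.2 ?_⟩
  obtain ⟨hxW, hxw⟩ := Finset.mem_sdiff.1 hx
  exact (hord.1 _ _ (isComponent_component x) (isComponent_component w)
    (mt component_eq_component_iff.1 hxw)).resolve_left (hmin x hxW)

lemma isAncestral_sdiff_latest [DecidableEq V] (hord : G.ConsistentOrder ord)
    (hW : G.IsAncestral W) (hw : W \ G.component w ⊆ G.pre ord (G.component w)) :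
    G.IsAncestral (W \ G.component w) := fun x hx => by
  have hlt := mem_pre.1 (hw hx)
  have hxW := hW x (Finset.mem_sdiff.1 hx).1
  have hdisj := (hord.disjoint_pre (isComponent_component w)).symm
  exact ⟨Finset.subset_sdiff.2 ⟨hxW.1,
      hdisj.mono_left ((isComponent_component x).subset_pre hlt)⟩,
    Finset.subset_sdiff.2 ⟨hxW.2, hdisj.mono_left ((hord.paD_subset_pre _).trans
      (hord.pre_subset_pre (isComponent_component w) (isComponent_component x) hlt))⟩⟩

end ConsistentOrder

end Order

section ConnectedComponents

variable {V : Type*} {G : MixedGraph V} {A B K : Finset V} {v w : V}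

lemma mem_compIn : w ∈ G.compIn A v ↔
    w ∈ A ∧ Relation.ReflTransGen (fun x y => x ∈ A ∧ y ∈ A ∧ G.undir x y) v w :=
  Finset.mem_filter

lemma compIn_subset (A : Finset V) (v : V) : G.compIn A v ⊆ A := Finset.filter_subset _ _

lemma mem_compIn_self (hv : v ∈ A) : v ∈ G.compIn A v := mem_compIn.2 ⟨hv, .refl⟩

lemma connectedIn_compIn (hv : v ∈ A) : G.ConnectedIn (G.compIn A v) := by
  let R : V → V → Prop := fun x y => x ∈ G.compIn A v ∧ y ∈ G.compIn A v ∧ G.undir x y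
  have : Std.Symm R := ⟨fun _ _ h => ⟨h.2.1, h.1, G.undir_symm h.2.2⟩⟩
  have hreach : ∀ a ∈ G.compIn A v, Relation.ReflTransGen R v a := fun a ha => by
    induction (mem_compIn.1 ha).2 with
    | refl => exact .refl
    | tail hvb hbc ih =>
      have hb := mem_compIn.2 ⟨hbc.1, hvb⟩
      exact (ih hb).tail ⟨hb, mem_compIn.2 ⟨hbc.2.1, hvb.tail hbc⟩, hbc.2.2⟩
  exact ⟨⟨v, mem_compIn_self hv⟩, fun a ha b hb =>
    (Std.Symm.symm (r := Relation.ReflTransGen R) _ _ (hreach a ha)).trans (hreach b hb)⟩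

variable [DecidableEq V]

lemma mem_connComps : K ∈ G.connComps A ↔ ∃ v ∈ A, G.compIn A v = K := Finset.mem_image

lemma subset_of_mem_connComps (hK : K ∈ G.connComps A) : K ⊆ A := by
  obtain ⟨v, -, rfl⟩ := mem_connComps.1 hK
  exact compIn_subset A v

lemma connectedIn_of_mem_connComps (hK : K ∈ G.connComps A) : G.ConnectedIn K := by
  obtain ⟨v, hv, rfl⟩ := mem_connComps.1 hK
  exact connectedIn_compIn hv

lemma ConnectedIn.connComps_eq (h : G.ConnectedIn A) : G.connComps A = {A} := by
  have hA : ∀ v ∈ A, G.compIn A v = A := fun v hv => Finset.filter_true_of_mem (h.2 v hv)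
  ext K
  rw [mem_connComps, Finset.mem_singleton]
  refine ⟨fun ⟨v, hv, hK⟩ => hK ▸ hA v hv, fun hK => ?_⟩
  obtain ⟨v, hv⟩ := h.1
  exact ⟨v, hv, hK ▸ hA v hv⟩

lemma disjoint_connComps (h : Disjoint A B) : Disjoint (G.connComps A) (G.connComps B) := by
  refine Finset.disjoint_left.2 fun K hA hB => ?_
  obtain ⟨a, ha⟩ := (connectedIn_of_mem_connComps hA).1
  exact Finset.disjoint_left.1 h (subset_of_mem_connComps hA ha) (subset_of_mem_connComps hB ha)

variable [Fintype V]

lemma disjoint_nbG_iff :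
    Disjoint (G.nbG A) B ↔ Disjoint A B ∧ ∀ a ∈ A, ∀ b ∈ B, ¬ G.undir a b := by
  rw [nbG, Finset.disjoint_union_left]
  simp only [Finset.disjoint_left, Finset.mem_filter, Finset.mem_univ, true_and]
  grind

lemma disjoint_nbG_symm (h : Disjoint (G.nbG A) B) : Disjoint (G.nbG B) A := by
  rw [disjoint_nbG_iff] at *
  exact ⟨h.1.symm, fun b hb a ha hba => h.2 a ha b hb (G.undir_symm hba)⟩

lemma disjoint_nbG_compIn (A : Finset V) (v : V) :
    Disjoint (G.nbG (G.compIn A v)) (A \ G.compIn A v) := by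
  refine disjoint_nbG_iff.2 ⟨Finset.disjoint_sdiff, fun a ha b hb hab => ?_⟩
  obtain ⟨hbA, hb⟩ := Finset.mem_sdiff.1 hb
  obtain ⟨haA, hva⟩ := mem_compIn.1 ha
  exact hb (mem_compIn.2 ⟨hbA, hva.tail ⟨haA, hbA, hab⟩⟩)

lemma compIn_union (h : Disjoint (G.nbG A) B) (hv : v ∈ A) :
    G.compIn (A ∪ B) v = G.compIn A v := by
  ext w
  refine ⟨fun hw => ?_, fun hw => ?_⟩
  · induction (mem_compIn.1 hw).2 with
    | refl => exact mem_compIn_self hv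
    | tail hvb hbc ih =>
      obtain ⟨hbA, hreach⟩ := mem_compIn.1 (ih (mem_compIn.2 ⟨hbc.1, hvb⟩))
      have hcA := (Finset.mem_union.1 hbc.2.1).resolve_right fun hcB =>
        (disjoint_nbG_iff.1 h).2 _ hbA _ hcB hbc.2.2
      exact mem_compIn.2 ⟨hcA, hreach.tail ⟨hbA, hcA, hbc.2.2⟩⟩
  · obtain ⟨hwA, hvw⟩ := mem_compIn.1 hw
    exact mem_compIn.2 ⟨Finset.mem_union_left B hwA, Relation.ReflTransGen.mono (fun _ _ hab =>
      ⟨Finset.mem_union_left B hab.1, Finset.mem_union_left B hab.2.1, hab.2.2⟩) _ _ hvw⟩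

lemma connComps_union (h : Disjoint (G.nbG A) B) :
    G.connComps (A ∪ B) = G.connComps A ∪ G.connComps B := by
  have hA : ∀ v ∈ A, G.compIn (A ∪ B) v = G.compIn A v := fun v => compIn_union h
  have hB : ∀ v ∈ B, G.compIn (A ∪ B) v = G.compIn B v := fun v hv => by
    rw [Finset.union_comm, compIn_union (disjoint_nbG_symm h) hv]
  ext K
  simp only [Finset.mem_union, mem_connComps]
  grind

end ConnectedComponents

end MixedGraph

section ConnCompsIndependence

variable {V : Type*} [Fintype V] [DecidableEq V] {r : V → ℕ} {G : MixedGraph V} {p : Cell r → ℝ}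
  {A B Q : Finset V}

/-- Mutual independence of the connected components of `A` given `Q`, required only on the cells
where the conditional probabilities are defined; it makes sense for connected and empty `A` too. -/
def CondIndepConnComps (G : MixedGraph V) (p : Cell r → ℝ) (A Q : Finset V) : Prop :=
  ∀ i, marginal p Q i ≠ 0 → condProb p A Q i = ∏ K ∈ G.connComps A, condProb p K Q i

lemma condIndepConnComps_empty : CondIndepConnComps G p ∅ Q := fun i hQ => by
  rw [condProb, Finset.empty_union, div_self hQ, MixedGraph.connComps, Finset.image_empty,
    Finset.prod_empty]

lemma condIndepConnComps_of_connectedIn (hA : G.ConnectedIn A) : CondIndepConnComps G p A Q :=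
  fun i _ => by rw [hA.connComps_eq, Finset.prod_singleton]

lemma condIndepConnComps_iff_forall (hA : A.Nonempty) : CondIndepConnComps G p A Q ↔
    ∀ i, condProb p A Q i = ∏ K ∈ G.connComps A, condProb p K Q i := by
  refine ⟨fun h i => ?_, fun h i _ => h i⟩
  by_cases hQ : marginal p Q i = 0
  · obtain ⟨v, hv⟩ := hA
    have hK : G.compIn A v ∈ G.connComps A := MixedGraph.mem_connComps.2 ⟨v, hv, rfl⟩
    -- Both sides vanish because `x / 0 = 0`.
    rw [Finset.prod_eq_zero hK] <;> rw [condProb, hQ, div_zero]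
  · exact h i hQ

lemma prod_connComps_union (h : Disjoint (G.nbG A) B) (f : Finset V → ℝ) :
    ∏ K ∈ G.connComps (A ∪ B), f K = (∏ K ∈ G.connComps A, f K) * ∏ K ∈ G.connComps B, f K := by
  rw [MixedGraph.connComps_union h, Finset.prod_union
    (MixedGraph.disjoint_connComps (MixedGraph.disjoint_nbG_iff.1 h).1)]

lemma CondIndepConnComps.condIndep (hp : 0 ≤ p) (hAB : CondIndepConnComps G p (A ∪ B) Q)
    (hA : CondIndepConnComps G p A Q) (hB : CondIndepConnComps G p B Q)
    (h : Disjoint (G.nbG A) B) : CondIndep p A B Q :=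
  (condIndep_iff_condProb_union hp).2 fun i hQ => by
    rw [hAB i hQ, hA i hQ, hB i hQ, prod_connComps_union h]

lemma CondIndepConnComps.union (hp : 0 ≤ p) (hA : CondIndepConnComps G p A Q)
    (hB : CondIndepConnComps G p B Q) (h : Disjoint (G.nbG A) B) (hAB : CondIndep p A B Q) :
    CondIndepConnComps G p (A ∪ B) Q := fun i hQ => by
  rw [(condIndep_iff_condProb_union hp).1 hAB i hQ, hA i hQ, hB i hQ, prod_connComps_union h]

lemma condIndepConnComps_of_forall_connectedIn (hp : 0 ≤ p)
    (h : ∀ B ⊆ A, G.ConnectedIn B → CondIndep p B (A \ G.nbG B) Q) :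
    CondIndepConnComps G p A Q := by
  induction A using Finset.strongInduction with
  | H A ih =>
    rcases A.eq_empty_or_nonempty with rfl | ⟨v, hv⟩
    · exact condIndepConnComps_empty
    set K := G.compIn A v
    have hKA : K ⊆ A := MixedGraph.compIn_subset A v
    have hconn : G.ConnectedIn K := MixedGraph.connectedIn_compIn hv
    have hsep : Disjoint (G.nbG K) (A \ K) := MixedGraph.disjoint_nbG_compIn A v
    have hdisj : ∀ B, Disjoint B (A \ G.nbG B) := fun B =>
      Finset.disjoint_sdiff.mono_left Finset.subset_union_left
    have hrest : CondIndepConnComps G p (A \ K) Q :=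
      ih _ (Finset.sdiff_ssubset hKA hconn.1) fun B hB hBc =>
        (h B (hB.trans Finset.sdiff_subset) hBc).mono_right (by grind) (hdisj B)
    have hind : CondIndep p K (A \ K) Q :=
      (h K hKA hconn).mono_right (by grind [Finset.disjoint_left]) (hdisj K)
    rw [← Finset.union_sdiff_of_subset hKA]
    exact (condIndepConnComps_of_connectedIn hconn).union hp hrest hsep hind

end ConnCompsIndependence

section Markov

variable {V : Type*} [Fintype V] [DecidableEq V] {r : V → ℕ} {G : MixedGraph V}
  {ord : Finset V → Finset V → Prop} {p : Cell r → ℝ} {T A Q W : Finset V}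

/-- The type IV property with `pre(T)` in the role of both `nd_D(T)` and `pa_D(T)`: the common
reformulation through which the two Markov properties are compared. -/
structure OrderedTypeIVMarkov (G : MixedGraph V) (ord : Finset V → Finset V → Prop)
    (p : Cell r → ℝ) : Prop where
  condIndep_pre : ∀ T, G.IsComponent T → ∀ A ⊆ T, CondIndep p A (G.pre ord T) (G.paG A)
  condIndep_sdiff_nbG : ∀ T, G.IsComponent T → ∀ A ⊆ T, G.ConnectedIn A →
    CondIndep p A (T \ G.nbG A) (G.pre ord T)

lemma mrMarkov_iff : MRMarkov G ord p ↔ ∀ T, G.IsComponent T → ∀ A ⊆ T,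
    (G.ConnectedIn A → CondIndep p A (G.pre ord T) (G.paG A)) ∧
      CondIndepConnComps G p A (G.pre ord T) := by
  refine forall₄_congr fun T _ A _ => ?_
  rcases A.eq_empty_or_nonempty with rfl | hA
  · have hempty : ¬ G.ConnectedIn ∅ := fun h => Finset.not_nonempty_empty h.1
    simp only [Finset.not_nonempty_empty, hempty, condIndepConnComps_empty, false_imp_iff,
      and_self]
  · rw [← condIndepConnComps_iff_forall hA, condIndep_sdiff]
    have := condIndepConnComps_of_connectedIn (p := p) (A := A) (G := G) (Q := G.pre ord T)
    tauto

lemma CondIndepConnComps.condIndep_paG (hp : 0 ≤ p) (hpa : ∀ K ⊆ A, G.paG K ⊆ Q)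
    (hAQ : Disjoint A Q) (hconn : ∀ K ⊆ A, G.ConnectedIn K → CondIndep p K Q (G.paG K))
    (h : CondIndepConnComps G p A Q) : CondIndep p A Q (G.paG A) := by
  have hsub : ∀ K ∈ G.connComps A, K ⊆ A := fun K => MixedGraph.subset_of_mem_connComps
  refine condIndep_of_condProb_eq hp (f := fun i => ∏ K ∈ G.connComps A, condProb p K (G.paG K) i)
    (fun i j hij => Finset.prod_congr rfl fun K hK => ?_) (hpa A subset_rfl) hAQ
    fun i hQ => (h i hQ).trans (Finset.prod_congr rfl fun K hK => ?_)
  · exact dependsOn_condProb p K (G.paG K) fun v hv =>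
      hij v (MixedGraph.union_paG_mono (hsub K hK) hv)
  · have hpaK := hpa K (hsub K hK)
    exact (hconn K (hsub K hK) (MixedGraph.connectedIn_of_mem_connComps hK)).condProb_eq hpaK
      (mt (marginal_eq_zero_of_subset hp hpaK) hQ) hQ

lemma mrMarkov_iff_orderedTypeIVMarkov (hG : G.NoSemiDirectedCycle) (hord : G.ConsistentOrder ord)
    (hp : 0 ≤ p) : MRMarkov G ord p ↔ OrderedTypeIVMarkov G ord p := by
  rw [mrMarkov_iff]
  refine ⟨fun h => ⟨fun T hT A hA => ?_, fun T hT A hA _ => ?_⟩, fun h T hT A hA =>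
    ⟨fun _ => h.condIndep_pre T hT A hA, ?_⟩⟩
  · exact (h T hT A hA).2.condIndep_paG hp
      (fun K hK => (MixedGraph.paG_subset_paD hG hT (hK.trans hA)).trans (hord.paD_subset_pre T))
      ((hord.disjoint_pre hT).mono_left hA) fun K hK => (h T hT K (hK.trans hA)).1
  · have hB : T \ G.nbG A ⊆ T := Finset.sdiff_subset
    exact (h T hT _ (Finset.union_subset hA hB)).2.condIndep hp (h T hT A hA).2 (h T hT _ hB).2
      Finset.disjoint_sdiff
  · exact condIndepConnComps_of_forall_connectedIn hp fun B hB hconn =>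
      (h.condIndep_sdiff_nbG T hT B (hB.trans hA) hconn).mono_right (by grind)
        (Finset.disjoint_sdiff.mono_left Finset.subset_union_left)

lemma condIndep_of_isAncestral (hord : G.ConsistentOrder ord) (hp : 0 ≤ p)
    (h : ∀ S, G.IsComponent S → CondIndep p S (G.pre ord S) (G.paD S)) (hT : G.IsComponent T)
    (hW : G.IsAncestral W) (hpaW : G.paD T ⊆ W) (hWT : W ⊆ G.ndD T) :
    CondIndep p T W (G.paD T) := by
  induction W using Finset.strongInduction with
  | H W ih =>
    have hpre : W ⊆ G.pre ord T → CondIndep p T W (G.paD T) := fun hWpre =>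
      (h T hT).mono_right (hWpre.trans Finset.subset_union_left) (hord.disjoint_pre hT)
    rcases W.eq_empty_or_nonempty with rfl | hne
    · exact hpre (Finset.empty_subset _)
    obtain ⟨w, hw, hlatest⟩ := hord.exists_latest hne
    set S := G.component w
    have hS : G.IsComponent S := MixedGraph.isComponent_component w
    have hwS : w ∈ S := MixedGraph.mem_component_self w
    have hSW : S ⊆ W := (hW w hw).1
    have hTS : T ≠ S := fun hTS =>
      Finset.disjoint_left.1 hT.disjoint_ndD (hTS ▸ hwS) (hWT hw)
    rcases hord.1 T S hT hS hTS with hlt | hlt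
    · exact hpre <| (sdiff_le_iff.1 hlatest).trans <|
        Finset.union_subset (hS.subset_pre hlt) (hord.pre_subset_pre hT hS hlt)
    · have hdisj := hord.disjoint_pre hS
      have hpaT : G.paD T ⊆ W \ S := Finset.subset_sdiff.2 ⟨hpaW, hdisj.symm.mono_left
        ((hord.paD_subset_pre T).trans (hord.pre_subset_pre hS hT hlt))⟩
      have hpaS : G.paD S ⊆ W \ S :=
        Finset.subset_sdiff.2 ⟨(hW w hw).2, hdisj.symm.mono_left (hord.paD_subset_pre S)⟩
      have hrest : CondIndep p T (W \ S) (G.paD T) :=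
        ih _ (Finset.sdiff_ssubset hSW ⟨w, hwS⟩) (hord.isAncestral_sdiff_latest hW hlatest) hpaT
          (Finset.sdiff_subset.trans hWT)
      rw [← Finset.union_sdiff_of_subset hSW]
      exact hrest.adjoin_right hp (h S hS) hpaT hpaS (hT.subset_pre hlt) hlatest hdisj

lemma orderedTypeIVMarkov_iff_typeIVMarkov (hG : G.NoSemiDirectedCycle)
    (hord : G.ConsistentOrder ord) (hp : 0 ≤ p) :
    OrderedTypeIVMarkov G ord p ↔ TypeIVMarkov G p := by
  have hpaG : ∀ T, G.IsComponent T → ∀ A ⊆ T, G.paG A ⊆ G.paD T := fun T hT A hA =>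
    MixedGraph.paG_subset_paD hG hT hA
  have hpaD := hord.paD_subset_pre
  have hdisj : ∀ T, G.IsComponent T → Disjoint T (G.pre ord T) := fun T => hord.disjoint_pre
  have hiff : ∀ T, G.IsComponent T → CondIndep p T (G.pre ord T) (G.paD T) → ∀ A ⊆ T,
      (CondIndep p A (T \ G.nbG A) (G.pre ord T) ↔ CondIndep p A (T \ G.nbG A) (G.paD T)) :=
    fun T hT h A hA => h.condIndep_iff_of_subset hp hA Finset.sdiff_subset (hpaD T) (hdisj T hT)
      (Finset.disjoint_sdiff.mono_left Finset.subset_union_left)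
  simp only [TypeIVMarkov, condIndep_sdiff]
  constructor
  · intro h
    have hT_pre : ∀ T, G.IsComponent T → CondIndep p T (G.pre ord T) (G.paD T) := fun T hT =>
      (h.condIndep_pre T hT T subset_rfl).weak_union hp (hpaG T hT T subset_rfl)
        ((hpaD T).trans Finset.subset_union_left) (hdisj T hT)
    refine ⟨fun T hT => ?_, fun T hT A hA => ?_, fun T hT A hA hconn => ?_⟩
    · exact condIndep_of_isAncestral hord hp hT_pre hT (MixedGraph.isAncestral_ndD T)
        ((hpaD T).trans (hord.pre_subset_ndD hT)) subset_rfl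
    · exact (h.condIndep_pre T hT A hA).mono_right ((hpaD T).trans Finset.subset_union_left)
        ((hdisj T hT).mono_left hA)
    · exact (hiff T hT (hT_pre T hT) A hA).1 (h.condIndep_sdiff_nbG T hT A hA hconn)
  · rintro ⟨hnd, hpa, hnb⟩
    have hT_pre : ∀ T, G.IsComponent T → CondIndep p T (G.pre ord T) (G.paD T) := fun T hT =>
      (hnd T hT).mono_right ((hord.pre_subset_ndD hT).trans Finset.subset_union_left)
        hT.disjoint_ndD
    refine ⟨fun T hT A hA => ?_, fun T hT A hA hconn => ?_⟩
    · exact (hpa T hT A hA).contraction hp ((hT_pre T hT).mono_left hA (hdisj T hT))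
        (hpaG T hT A hA) (hpaD T)
    · exact (hiff T hT (hT_pre T hT) A hA).2 (hnb T hT A hA hconn)

theorem mr_markov_iff_typeIV_general (hG : G.NoSemiDirectedCycle) (hord : G.ConsistentOrder ord)
    (hp : 0 ≤ p) : MRMarkov G ord p ↔ TypeIVMarkov G p :=
  (mrMarkov_iff_orderedTypeIVMarkov hG hord hp).trans
    (orderedTypeIVMarkov_iff_typeIVMarkov hG hord hp)

end Markov

/-- Theorem 1: for a chain graph `G` with a consistent strict
total ordering of its chain components, a strictly positive joint pmf obeys the
multivariate regression Markov property iff it obeys the block-recursive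
Markov property of type IV. -/
theorem mr_markov_iff_typeIV
    {V : Type*} [Fintype V] [DecidableEq V] {r : V → ℕ} (hr : ∀ v, 2 ≤ r v)
    (G : MixedGraph V) (hG : G.NoSemiDirectedCycle)
    (ord : Finset V → Finset V → Prop) (hord : G.ConsistentOrder ord)
    (p : Cell r → ℝ) (hp : IsPosPMF p) :
    MRMarkov G ord p ↔ TypeIVMarkov G p :=
  mr_markov_iff_typeIV_general hG hord fun i => (hp.1 i).le
end

section
/- Let A and B be disjoint subsets of V with A nonempty, and let p be a strictly positive joint probability mass function of the discrete random vector (X_v)_{v∈V}. Then for every cell i*_A of the A-table with all coordinates ≥ 2 and every cell i_B of the B-table, the conditional multivariate logistic contrast of p_{A|B} satisfies η^{(A)}(i*_A | i_B) = Σ_{b ⊆ B} λ^{A∪B}_{A∪b}(i*_A, i_b), where λ^{A∪B}_s are the baseline-coded log-linear parameters of the marginal distribution p_{A∪B}. -/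
open scoped Classical BigOperators

variable {V : Type*} [Fintype V] [DecidableEq V] {r : V → ℕ}

/-!
Restricting the log-linear expansion of `log p_{A∪B}` to the cells `(i_s, 1_{A∖s}, i_B)` kills every
parameter `λ_t` with `t ⊄ s ∪ B`, so `s ↦ log p_{A∪B}(i_s, 1_{A∖s}, i_B)` is the zeta transform
`s ↦ ∑_{a ⊆ s} g a` of `g a = ∑_{b ⊆ B} λ_{a∪b}(i)`. The contrast is its Möbius transform at `A`,
that is `g A`; the conditioning term `log p_B(i_B)` does not depend on `s` and cancels because `A`
is nonempty.
-/

section BooleanLattice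

variable {α R M : Type*} [DecidableEq α]

theorem sum_powerset_union_of_disjoint [AddCommMonoid M] {A B : Finset α} (hAB : Disjoint A B)
    (f : Finset α → M) :
    ∑ s ∈ (A ∪ B).powerset, f s = ∑ a ∈ A.powerset, ∑ b ∈ B.powerset, f (a ∪ b) := by
  induction A using Finset.induction_on generalizing f with
  | empty => simp
  | insert x A hx ih =>
    obtain ⟨hxB, hAB⟩ := Finset.disjoint_insert_left.mp hAB
    have hxAB : x ∉ A ∪ B := Finset.notMem_union.mpr ⟨hx, hxB⟩
    rw [Finset.insert_union, Finset.sum_powerset_insert hxAB, Finset.sum_powerset_insert hx,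
      ih hAB f, ih hAB fun s ↦ f (insert x s)]
    simp only [Finset.insert_union]

variable [Ring R] [AddCommGroup M] [Module R M]

theorem sum_powerset_neg_one_pow_card_sdiff_smul_sum_powerset (g : Finset α → M) (A : Finset α) :
    ∑ s ∈ A.powerset, (-1 : R) ^ (A \ s).card • ∑ t ∈ s.powerset, g t = g A := by
  induction A using Finset.induction_on generalizing g with
  | empty => simp
  | insert x A hx ih =>
    have cancel : ∀ s ∈ A.powerset,
        (-1 : R) ^ (insert x A \ s).card • ∑ t ∈ s.powerset, g t +
          (-1 : R) ^ (insert x A \ insert x s).card • ∑ t ∈ (insert x s).powerset, g t =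
        (-1 : R) ^ (A \ s).card • ∑ t ∈ s.powerset, g (insert x t) := by
      intro s hs
      have hxs : x ∉ s := fun h ↦ hx (Finset.mem_powerset.mp hs h)
      have hxA : x ∉ A \ s := fun h ↦ hx (Finset.mem_sdiff.mp h).1
      rw [Finset.insert_sdiff_of_notMem A hxs, Finset.card_insert_of_notMem hxA,
        Finset.insert_sdiff_insert, Finset.sdiff_insert_of_notMem hx,
        Finset.sum_powerset_insert hxs, pow_succ, mul_neg_one, neg_smul, smul_add,
        neg_add_cancel_left]
    rw [Finset.sum_powerset_insert hx, ← Finset.sum_add_distrib, Finset.sum_congr rfl cancel]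
    exact ih fun t ↦ g (insert x t)

theorem sum_powerset_neg_one_pow_card_sdiff_of_nonempty {A : Finset α} (hA : A.Nonempty) :
    ∑ s ∈ A.powerset, (-1 : R) ^ (A \ s).card = 0 := by
  -- Constants are the zeta transforms of functions supported at `∅`.
  simpa [hA.ne_empty] using
    sum_powerset_neg_one_pow_card_sdiff_smul_sum_powerset (R := R)
      (fun t : Finset α ↦ if t = ∅ then (1 : R) else 0) A

end BooleanLattice

section Marginal

variable {p : Cell r → ℝ}

theorem marginal_congr {S : Finset V} {i j : Cell r} (h : ∀ v ∈ S, i v = j v) :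
    marginal p S i = marginal p S j := by
  have hiff (k : Cell r) : (∀ v ∈ S, k v = i v) ↔ ∀ v ∈ S, k v = j v :=
    forall₂_congr fun v hv ↦ by rw [h v hv]
  simp only [marginal, hiff]

theorem marginal_antitone (hp : 0 ≤ p) (i : Cell r) : Antitone fun S ↦ marginal p S i := by
  intro S T hST
  refine Finset.sum_le_sum fun j _ ↦ ?_
  split_ifs with hT hS hS
  · exact le_rfl
  · exact absurd (fun v hv ↦ hT v (hST hv)) hS
  · exact hp j
  · exact le_rfl

theorem marginal_univ (p : Cell r → ℝ) (i : Cell r) : marginal p Finset.univ i = p i := by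
  simp [marginal, ← funext_iff]

theorem marginal_pos (hp : ∀ i, 0 < p i) (S : Finset V) (i : Cell r) : 0 < marginal p S i :=
  calc
    0 < p i := hp i
    _ = marginal p Finset.univ i := (marginal_univ p i).symm
    _ ≤ marginal p S i := marginal_antitone (fun j ↦ (hp j).le) i (Finset.subset_univ S)

theorem marginal_splice (hr : ∀ v, 2 ≤ r v) {S T : Finset V} (hST : S ⊆ T) (i : Cell r) :
    marginal p S (splice hr T i) = marginal p S i :=
  marginal_congr fun _ hv ↦ if_pos (hST hv)

theorem log_condProb {A B : Finset V} (hp : 0 ≤ p) {i : Cell r} (hpos : 0 < marginal p (A ∪ B) i) :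
    Real.log (condProb p A B i) =
      Real.log (marginal p (A ∪ B) i) - Real.log (marginal p B i) := by
  have hposB : 0 < marginal p B i :=
    hpos.trans_le (marginal_antitone hp i Finset.subset_union_right)
  exact Real.log_div hpos.ne' hposB.ne'

theorem mlContrast_eq_sum_log_marginal (hr : ∀ v, 2 ≤ r v) (hp : 0 ≤ p) {A B : Finset V}
    (hA : A.Nonempty) (hpos : ∀ i, 0 < marginal p (A ∪ B) i) (i : Cell r) :
    mlContrast hr p A B i = ∑ s ∈ A.powerset,
      (-1 : ℝ) ^ (A \ s).card * Real.log (marginal p (A ∪ B) (splice hr (s ∪ B) i)) := by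
  have hB (s : Finset V) : marginal p B (splice hr (s ∪ B) i) = marginal p B i :=
    marginal_splice hr Finset.subset_union_right i
  simp only [mlContrast, log_condProb hp (hpos _), hB, mul_sub, Finset.sum_sub_distrib]
  rw [← Finset.sum_mul, sum_powerset_neg_one_pow_card_sdiff_of_nonempty hA, zero_mul, sub_zero]

end Marginal

section BaselineExpansion

variable {ι M : Type*} [AddCommMonoid M] {r : ι → ℕ}

/-- `IsBaselineExpansion S f lam` says that `lam s`, for `s ⊆ S`, are the baseline-coded parameters
of the function `f` on the `S`-table; for `f = log p_S` these are the log-linear parameters `λ^S_s`.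
Functions on the `s`-table are encoded as functions of a full cell that depend only on its
coordinates in `s`, and the baseline level is `0`. -/
structure IsBaselineExpansion (S : Finset ι) (f : Cell r → M) (lam : Finset ι → Cell r → M) :
    Prop where
  congr : ∀ s ⊆ S, ∀ i j : Cell r, (∀ v ∈ s, i v = j v) → lam s i = lam s j
  eq_zero : ∀ s ⊆ S, ∀ i : Cell r, (∃ v ∈ s, (i v : ℕ) = 0) → lam s i = 0
  eq_sum : ∀ i : Cell r, f i = ∑ s ∈ S.powerset, lam s i

namespace IsBaselineExpansion

variable [DecidableEq ι] {S : Finset ι} {f : Cell r → M} {lam : Finset ι → Cell r → M}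

theorem param_splice (h : IsBaselineExpansion S f lam) (hr : ∀ v, 2 ≤ r v) {s : Finset ι}
    (hs : s ⊆ S) (T : Finset ι) (i : Cell r) :
    lam s (splice hr T i) = if s ⊆ T then lam s i else 0 := by
  split_ifs with hsT
  · exact h.congr s hs _ _ fun v hv ↦ if_pos (hsT hv)
  · obtain ⟨v, hv, hvT⟩ := Finset.not_subset.mp hsT
    exact h.eq_zero s hs _ ⟨v, hv, by simp only [splice, if_neg hvT]⟩

theorem apply_splice (h : IsBaselineExpansion S f lam) (hr : ∀ v, 2 ≤ r v) {T : Finset ι}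
    (hT : T ⊆ S) (i : Cell r) : f (splice hr T i) = ∑ s ∈ T.powerset, lam s i := by
  have hfilter : S.powerset.filter (· ⊆ T) = T.powerset := by
    ext s
    simpa using fun hs : s ⊆ T ↦ hs.trans hT
  rw [h.eq_sum, ← hfilter, Finset.sum_filter]
  exact Finset.sum_congr rfl fun s hs ↦ h.param_splice hr (Finset.mem_powerset.mp hs) T i

end IsBaselineExpansion

end BaselineExpansion

theorem mlContrast_eq_sum_loglin_general (hr : ∀ v, 2 ≤ r v) {p : Cell r → ℝ} (hp : 0 ≤ p)
    {A B : Finset V} (hA : A.Nonempty) (hAB : Disjoint A B)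
    (hpos : ∀ i, 0 < marginal p (A ∪ B) i) {lam : Finset V → Cell r → ℝ}
    (hlam : IsBaselineExpansion (A ∪ B) (fun i ↦ Real.log (marginal p (A ∪ B) i)) lam)
    (i : Cell r) :
    mlContrast hr p A B i = ∑ b ∈ B.powerset, lam (A ∪ b) i := by
  have hzeta : ∀ s ∈ A.powerset, Real.log (marginal p (A ∪ B) (splice hr (s ∪ B) i)) =
      ∑ a ∈ s.powerset, ∑ b ∈ B.powerset, lam (a ∪ b) i := by
    intro s hs
    have hsA : s ⊆ A := Finset.mem_powerset.mp hs
    rw [hlam.apply_splice hr (Finset.union_subset_union_left hsA),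
      sum_powerset_union_of_disjoint (hAB.mono_left hsA)]
  calc
    mlContrast hr p A B i = ∑ s ∈ A.powerset,
        (-1 : ℝ) ^ (A \ s).card * Real.log (marginal p (A ∪ B) (splice hr (s ∪ B) i)) :=
      mlContrast_eq_sum_log_marginal hr hp hA hpos i
    _ = ∑ s ∈ A.powerset,
        (-1 : ℝ) ^ (A \ s).card • ∑ a ∈ s.powerset, ∑ b ∈ B.powerset, lam (a ∪ b) i :=
      Finset.sum_congr rfl fun s hs ↦ by rw [hzeta s hs, smul_eq_mul]
    _ = ∑ b ∈ B.powerset, lam (A ∪ b) i :=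
      sum_powerset_neg_one_pow_card_sdiff_smul_sum_powerset _ A

/-- Lemma 2: the conditional multivariate logistic contrast
`η^{(A)}(i*_A | i_B)` equals `Σ_{b ⊆ B} λ^{A∪B}_{A∪b}(i*_A, i_b)`, where the
`λ^{A∪B}_s` are the baseline-coded log-linear parameters of the marginal
distribution `p_{A∪B}`. -/
theorem mlContrast_eq_sum_loglin
    {V : Type*} [Fintype V] [DecidableEq V] {r : V → ℕ} (hr : ∀ v, 2 ≤ r v)
    (p : Cell r → ℝ) (hp : IsPosPMF p)
    (A B : Finset V) (hA : A.Nonempty) (hAB : Disjoint A B)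
    (lam : Finset V → Cell r → ℝ)
    (hloc : ∀ s, ∀ i j : Cell r, (∀ v ∈ s, i v = j v) → lam s i = lam s j)
    (hbase : ∀ s, ∀ i : Cell r, (∃ v ∈ s, (i v : ℕ) = 0) → lam s i = 0)
    (hsum : ∀ i : Cell r,
      Real.log (marginal p (A ∪ B) i) = ∑ s ∈ (A ∪ B).powerset, lam s i) :
    ∀ i : Cell r, (∀ v ∈ A, (i v : ℕ) ≠ 0) →
      mlContrast hr p A B i = ∑ b ∈ B.powerset, lam (A ∪ b) i :=
  fun i _ ↦ mlContrast_eq_sum_loglin_general hr (fun j ↦ (hp.1 j).le) hA hAB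
    (marginal_pos hp.1 (A ∪ B)) ⟨fun s _ ↦ hloc s, fun s _ ↦ hbase s, hsum⟩ i
end
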